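/- arXiv:1601.00051 — 7 statements merged into one kernel-verified Lean document; each statement's English description precedes it below -/
import Mathlib

section
/- Let V be a finite-dimensional real vector space of dimension n, let S be a reflection on V, and let A be any linear endomorphism of V. Then dim ker(1+A) − 1 ≤ dim ker(1+A∘S) ≤ dim ker(1+A) + 1, where 1 denotes the identity operator on V. -/
/-!
The maps `1 + A` and `1 + A * S` agree on the hyperplane `ker (1 - S)` of fixed points of `S`, so
each kernel meets that hyperplane in the same subspace, which has codimension at most one in
either kernel. Both inequalities are instances of `finrank_ker_le_of_eqOn`.
-/

/-- If `P` and `Q` agree on a subspace `W` of codimension at most one, then the nullity of `P`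
exceeds that of `Q` by at most one: `ker P ⊓ W` has codimension at most one in `ker P` and lies in
`ker Q`. -/
theorem finrank_ker_le_of_eqOn {V : Type*} [AddCommGroup V] [Module ℝ V] [FiniteDimensional ℝ V]
    (W : Submodule ℝ V) (hW : Module.finrank ℝ V ≤ Module.finrank ℝ W + 1)
    (P Q : Module.End ℝ V) (h : ∀ x ∈ W, P x = Q x) :
    Module.finrank ℝ (LinearMap.ker P) ≤ Module.finrank ℝ (LinearMap.ker Q) + 1 := by
  have h1 := Submodule.finrank_sup_add_finrank_inf_eq (LinearMap.ker P) W
  have h2 := Submodule.finrank_le (LinearMap.ker P ⊔ W)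
  have h3 : Module.finrank ℝ (LinearMap.ker P ⊓ W : Submodule ℝ V)
      ≤ Module.finrank ℝ (LinearMap.ker Q) := by
    refine Submodule.finrank_mono fun x hx => ?_
    obtain ⟨hxP, hxW⟩ := hx
    exact (h x hxW).symm.trans hxP
  omega

/-- Part of Lemma 4.1: for a reflection `S` on an `n`-dimensional real vector space `V`
(i.e. `dim ker(1 - S) = n - 1` and `dim ker(1 + S) = 1`) and any endomorphism `A` of `V`,
`dim ker(1 + A) - 1 ≤ dim ker(1 + A ∘ S) ≤ dim ker(1 + A) + 1`. -/
theorem stmt0 (V : Type*) [AddCommGroup V] [Module ℝ V] [FiniteDimensional ℝ V]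
    (n : ℕ) (hn : Module.finrank ℝ V = n)
    (S : Module.End ℝ V)
    (hS1 : Module.finrank ℝ (LinearMap.ker (1 - S)) = n - 1)
    (hS2 : Module.finrank ℝ (LinearMap.ker (1 + S)) = 1)
    (A : Module.End ℝ V) :
    Module.finrank ℝ (LinearMap.ker (1 + A)) - 1
      ≤ Module.finrank ℝ (LinearMap.ker (1 + A * S)) ∧
    Module.finrank ℝ (LinearMap.ker (1 + A * S))
      ≤ Module.finrank ℝ (LinearMap.ker (1 + A)) + 1 := by
  have hW : Module.finrank ℝ V ≤ Module.finrank ℝ (LinearMap.ker (1 - S)) + 1 := by omega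
  have h : ∀ x ∈ LinearMap.ker (1 - S), (1 + A) x = (1 + A * S) x := by
    intro x hx
    have hSx : x = S x := sub_eq_zero.mp hx
    simp [← hSx]
  have h1 := finrank_ker_le_of_eqOn _ hW _ _ h
  have h2 := finrank_ker_le_of_eqOn _ hW _ _ fun x hx => (h x hx).symm
  exact ⟨by omega, h2⟩
end

section
/- Let V be a finite-dimensional real vector space of dimension n, let S be a reflection on V, and let A be any linear endomorphism of V. Then rk(1+A) = 1 + rk(1+A∘S) if and only if ker(1+S) ⊆ im(1+A) and ker(1+S) ∩ im(1+A∘S) = {0}, where 1 denotes the identity operator on V. -/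
/-!
Put `K = ker (1 + S)`, a line. As `S` is a reflection, `im (1 - S) = K`, so `S ^ 2 = 1`. From
`(1 + A S) x = (1 + A) (S x) + (x - S x)` the images of `1 + A` and `1 + A S` agree modulo `K`:
`im (1 + A) + K = im (1 + A S) + K`. What remains is a dimension count, using that adding the line
`K` to a subspace raises its dimension by `1 - dim (K ∩ ·)`.
-/

/-- On `ker (1 + S)` the map `1 - S` is multiplication by `2`, so `ker (1 + S) ≤ im (1 - S)`; for a
reflection both spaces are lines. -/
lemma range_one_sub_eq_ker_one_add {V : Type*} [AddCommGroup V] [Module ℝ V]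
    [FiniteDimensional ℝ V] {S : Module.End ℝ V}
    (hS1 : Module.finrank ℝ (LinearMap.ker (1 - S)) = Module.finrank ℝ V - 1)
    (hS2 : Module.finrank ℝ (LinearMap.ker (1 + S)) = 1) :
    LinearMap.range (1 - S) = LinearMap.ker (1 + S) := by
  have hle : LinearMap.ker (1 + S) ≤ LinearMap.range (1 - S) := by
    intro x hx
    have hx' : x + S x = 0 := by simpa using hx
    refine ⟨(1 / 2 : ℝ) • x, ?_⟩
    have hSx : S x = -x := (neg_eq_of_add_eq_zero_right hx').symm
    simp only [LinearMap.sub_apply, Module.End.one_apply, map_smul, hSx]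
    module
  symm
  apply Submodule.eq_of_le_of_finrank_eq hle
  have h1 := LinearMap.finrank_range_add_finrank_ker (1 - S)
  have h2 := Submodule.finrank_le (LinearMap.ker (1 + S))
  omega

/-- The images of `1 + A` and `1 + A S` agree modulo the line `ker (1 + S)`. -/
lemma range_sup_ker_eq {V : Type*} [AddCommGroup V] [Module ℝ V] {S : Module.End ℝ V}
    (hS : LinearMap.range (1 - S) = LinearMap.ker (1 + S)) (A : Module.End ℝ V) :
    LinearMap.range (1 + A) ⊔ LinearMap.ker (1 + S) =
      LinearMap.range (1 + A * S) ⊔ LinearMap.ker (1 + S) := by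
  have hmem (x : V) : x - S x ∈ LinearMap.ker (1 + S) := by
    rw [← hS]
    exact ⟨x, by simp⟩
  have hinv (x : V) : S (S x) = x := by
    have h := hmem x
    simp only [LinearMap.mem_ker, LinearMap.add_apply, Module.End.one_apply, map_sub] at h
    have h' : x - S (S x) = 0 := by rw [← h]; abel
    exact (sub_eq_zero.mp h').symm
  apply le_antisymm
  · refine sup_le ?_ le_sup_right
    rintro _ ⟨x, rfl⟩
    have h : (1 + A) x = (1 + A * S) (S x) + (x - S x) := by
      simp only [LinearMap.add_apply, Module.End.one_apply, Module.End.mul_apply, hinv]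
      abel
    rw [h]
    exact Submodule.add_mem_sup ⟨_, rfl⟩ (hmem x)
  · refine sup_le ?_ le_sup_right
    rintro _ ⟨x, rfl⟩
    have h : (1 + A * S) x = (1 + A) (S x) + (x - S x) := by
      simp only [LinearMap.add_apply, Module.End.one_apply, Module.End.mul_apply]
      abel
    rw [h]
    exact Submodule.add_mem_sup ⟨_, rfl⟩ (hmem x)


/-- Last statement of Lemma 4.1: for a reflection `S` on an `n`-dimensional real vector
space `V` (i.e. `dim ker(1 - S) = n - 1` and `dim ker(1 + S) = 1`) and any endomorphism
`A` of `V`, one has `rk(1 + A) = 1 + rk(1 + A ∘ S)` if and only if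
`ker(1 + S) ⊆ im(1 + A)` and `ker(1 + S) ∩ im(1 + A ∘ S) = {0}`. -/
theorem stmt2 (V : Type*) [AddCommGroup V] [Module ℝ V] [FiniteDimensional ℝ V]
    (n : ℕ) (hn : Module.finrank ℝ V = n)
    (S : Module.End ℝ V)
    (hS1 : Module.finrank ℝ (LinearMap.ker (1 - S)) = n - 1)
    (hS2 : Module.finrank ℝ (LinearMap.ker (1 + S)) = 1)
    (A : Module.End ℝ V) :
    Module.finrank ℝ (LinearMap.range (1 + A))
        = 1 + Module.finrank ℝ (LinearMap.range (1 + A * S)) ↔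
      LinearMap.ker (1 + S) ≤ LinearMap.range (1 + A) ∧
      LinearMap.ker (1 + S) ⊓ LinearMap.range (1 + A * S) = ⊥ := by
  subst hn
  have hsup := range_sup_ker_eq (range_one_sub_eq_ker_one_add hS1 hS2) A
  have hdim := Submodule.finrank_sup_add_finrank_inf_eq (LinearMap.ker (1 + S))
    (LinearMap.range (1 + A * S))
  rw [sup_comm, ← hsup] at hdim
  constructor
  · intro h
    have hle : LinearMap.range (1 + A) ≤ LinearMap.range (1 + A) ⊔ LinearMap.ker (1 + S) :=
      le_sup_left
    have hmono := Submodule.finrank_mono hle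
    constructor
    · have heq := Submodule.eq_of_le_of_finrank_le hle (by omega)
      exact sup_eq_left.mp heq.symm
    · exact Submodule.finrank_eq_zero.mp (by omega)
  · rintro ⟨hK, hinf⟩
    rw [sup_eq_left.mpr hK, hinf, finrank_bot] at hdim
    omega
end

section
/- Let V be a finite-dimensional real vector space of dimension n, let S be a reflection on V, and let x₀ be a nonzero vector of V with S(x₀) = −x₀. Then for any linear endomorphism A of V one has im(1+A) + ℝ·x₀ = im(1+A∘S) + ℝ·x₀, where 1 denotes the identity operator on V and ℝ·x₀ is the line spanned by x₀. -/
/-!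
By rank-nullity `im (1 - S)` is a line, and it contains `x₀ = (1 - S) (x₀ / 2)`, so
`v - S v ∈ ℝ·x₀` for every `v`; together with `S x₀ = -x₀` this gives `S (S v) = v`. The identity
`(1 + A S) v = (1 + A) (S v) + (v - S v)` then shows one inclusion, and the same identity at `S v`,
which reads `(1 + A) v = (1 + A S) (S v) + (v - S v)`, shows the other.
-/

/-- From the proof of Lemma 4.1: for a reflection `S` on an `n`-dimensional real vector
space `V` and a nonzero vector `x₀` with `S x₀ = -x₀`, for any endomorphism `A` of `V`
one has `im(1 + A) + ℝ·x₀ = im(1 + A ∘ S) + ℝ·x₀`. -/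
theorem stmt3 (V : Type*) [AddCommGroup V] [Module ℝ V] [FiniteDimensional ℝ V]
    (n : ℕ) (hn : Module.finrank ℝ V = n)
    (S : Module.End ℝ V)
    (hS1 : Module.finrank ℝ (LinearMap.ker (1 - S)) = n - 1)
    (hS2 : Module.finrank ℝ (LinearMap.ker (1 + S)) = 1)
    (x₀ : V) (hx₀ : x₀ ≠ 0) (hSx₀ : S x₀ = -x₀)
    (A : Module.End ℝ V) :
    LinearMap.range (1 + A) ⊔ Submodule.span ℝ {x₀}
      = LinearMap.range (1 + A * S) ⊔ Submodule.span ℝ {x₀} := by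
  have hn0 : 0 < Module.finrank ℝ V := Module.finrank_pos_iff_exists_ne_zero.mpr ⟨x₀, hx₀⟩
  have hrn := LinearMap.finrank_range_add_finrank_ker (1 - S)
  have hle : Submodule.span ℝ {x₀} ≤ LinearMap.range (1 - S) := by
    rw [Submodule.span_singleton_le_iff_mem]
    refine ⟨(1 / 2 : ℝ) • x₀, ?_⟩
    simp only [LinearMap.sub_apply, Module.End.one_apply, map_smul, hSx₀]
    module
  have hline : Submodule.span ℝ {x₀} = LinearMap.range (1 - S) := by
    apply Submodule.eq_of_le_of_finrank_eq hle
    rw [finrank_span_singleton hx₀]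
    omega
  have hmem (v : V) : v - S v ∈ Submodule.span ℝ {x₀} := by
    rw [hline]
    exact ⟨v, by simp⟩
  have hSS (v : V) : S (S v) = v := by
    obtain ⟨c, hc⟩ := Submodule.mem_span_singleton.mp (hmem v)
    have h := congrArg S hc
    rw [map_smul, hSx₀, smul_neg, hc, map_sub] at h
    rw [neg_sub] at h
    exact (sub_right_injective h).symm
  apply le_antisymm
  · refine sup_le ?_ le_sup_right
    rintro _ ⟨v, rfl⟩
    have h : (1 + A) v = (1 + A * S) (S v) + (v - S v) := by
      simp only [LinearMap.add_apply, Module.End.one_apply, Module.End.mul_apply, hSS]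
      abel
    rw [h]
    exact Submodule.add_mem_sup ⟨S v, rfl⟩ (hmem v)
  · refine sup_le ?_ le_sup_right
    rintro _ ⟨v, rfl⟩
    have h : (1 + A * S) v = (1 + A) (S v) + (v - S v) := by
      simp only [LinearMap.add_apply, Module.End.one_apply, Module.End.mul_apply]
      abel
    rw [h]
    exact Submodule.add_mem_sup ⟨S v, rfl⟩ (hmem v)
end

section
/- Let V be a finite-dimensional real inner product space, let A and S be linear endomorphisms of V preserving the inner product, and suppose S is a reflection. Then dim ker(1+A∘S) = dim ker(1+A) + 1 or dim ker(1+A∘S) = dim ker(1+A) − 1, and likewise rk(1+A∘S) = rk(1+A) + 1 or rk(1+A∘S) = rk(1+A) − 1, where 1 denotes the identity operator on V. -/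
open scoped RealInnerProductSpace

/-!
Write `S x = x - 2 ⟪v, x⟫ v` with `v` a unit vector (`exists_unit_normal`). Since `S` fixes the
hyperplane `vᗮ = ker ⟪v, ·⟫`, the kernels of `1 + A` and `1 + A S` have the same intersection
with `vᗮ`, and the dimension of each kernel is that of the intersection, or one more when the
kernel is not contained in `vᗮ`. So the claim is that exactly one of the two kernels lies in `vᗮ`.

* They cannot both leave `vᗮ`: if `A u = -u` and `A S w = -w`, then `(1 + A) w = 2 ⟪v, w⟫ A v`,
  and the left side is orthogonal to `u`, whence `⟪v, w⟫ ⟪v, u⟫ = 0` (`inner_mul_inner_eq_zero`).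
* They cannot both lie in `vᗮ`: if `ker (1 + A) ≤ vᗮ`, then `A v ⊥ ker (1 + A)`, and
  `ker (1 + A)ᗮ = range (1 + A)`, so `(1 + A) w = A v` for some `w`. Comparing norms gives
  `⟪v, w⟫ = 1 / 2`, which is exactly what makes `w` a vector of `ker (1 + A S)` outside `vᗮ`
  (`exists_mem_ker`).

The statement on ranks follows by rank-nullity.
-/

section

variable {V : Type*} [NormedAddCommGroup V] [InnerProductSpace ℝ V]

/-- A reflection preserving the inner product is the orthogonal reflection along a unit vector. -/
lemma exists_unit_normal [FiniteDimensional ℝ V] (S : Module.End ℝ V)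
    (hS : ∀ x y : V, ⟪S x, S y⟫ = ⟪x, y⟫)
    (hS1 : Module.finrank ℝ (LinearMap.ker (1 - S)) = Module.finrank ℝ V - 1)
    (hS2 : Module.finrank ℝ (LinearMap.ker (1 + S)) = 1) :
    ∃ v : V, ⟪v, v⟫ = 1 ∧ ∀ x, S x = x - (2 * ⟪v, x⟫) • v := by
  have hne : LinearMap.ker (1 + S) ≠ ⊥ := by
    intro h
    rw [h, finrank_bot] at hS2
    exact zero_ne_one hS2
  obtain ⟨u, hu, hu0⟩ := Submodule.exists_mem_ne_zero_of_ne_bot hne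
  obtain ⟨v, hv, hSv⟩ : ∃ v : V, ⟪v, v⟫ = 1 ∧ S v = -v := by
    refine ⟨‖u‖⁻¹ • u, ?_, ?_⟩
    · have : ‖u‖ ≠ 0 := norm_ne_zero_iff.2 hu0
      rw [real_inner_smul_left, real_inner_smul_right, real_inner_self_eq_norm_sq]
      field_simp
    · have h : u + S u = 0 := by simpa using hu
      rw [map_smul, eq_neg_of_add_eq_zero_right h, smul_neg]
  have hv0 : v ≠ 0 := by
    rintro rfl
    simp at hv
  refine ⟨v, hv, fun x => ?_⟩
  have hle : LinearMap.ker (1 - S) ≤ (ℝ ∙ v)ᗮ := by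
    intro y hy
    have h : S y = y := by
      have : y - S y = 0 := by simpa using hy
      exact (sub_eq_zero.1 this).symm
    rw [Submodule.mem_orthogonal_singleton_iff_inner_right]
    have h2 := hS v y
    rw [h, hSv, inner_neg_left] at h2
    linarith
  have heq : LinearMap.ker (1 - S) = (ℝ ∙ v)ᗮ := by
    apply Submodule.eq_of_le_of_finrank_eq hle
    have h1 := Submodule.finrank_add_finrank_orthogonal (ℝ ∙ v)
    rw [finrank_span_singleton hv0] at h1
    omega
  have hmem : x - ⟪v, x⟫ • v ∈ LinearMap.ker (1 - S) := by
    rw [heq, Submodule.mem_orthogonal_singleton_iff_inner_right, inner_sub_right,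
      real_inner_smul_right, hv]
    ring
  have h3 : (x - ⟪v, x⟫ • v) - S (x - ⟪v, x⟫ • v) = 0 := by simpa using hmem
  rw [map_sub, map_smul, hSv] at h3
  have h4 : S x = x - ⟪v, x⟫ • v + ⟪v, x⟫ • -v := by
    rw [← sub_eq_zero, ← neg_eq_zero, ← h3]
    abel
  rw [h4]
  module

/-- An isometry is normal, so the kernel and the range of `1 + A` are orthogonal complements. -/
lemma range_one_add_eq [FiniteDimensional ℝ V] (A : Module.End ℝ V)
    (hA : ∀ x y : V, ⟪A x, A y⟫ = ⟪x, y⟫) :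
    LinearMap.range (1 + A) = (LinearMap.ker (1 + A))ᗮ := by
  apply Submodule.eq_of_le_of_finrank_eq
  · rintro _ ⟨w, rfl⟩
    rw [Submodule.mem_orthogonal]
    intro u hu
    have hu' : u + A u = 0 := by simpa using hu
    have h := hA u w
    rw [eq_neg_of_add_eq_zero_right hu', inner_neg_left] at h
    simp only [LinearMap.add_apply, Module.End.one_apply, inner_add_right]
    linarith
  · have h1 := Submodule.finrank_add_finrank_orthogonal (LinearMap.ker (1 + A))
    have h2 := LinearMap.finrank_range_add_finrank_ker (1 + A)
    omega

lemma inner_mul_inner_eq_zero (A S : Module.End ℝ V) (v u w : V)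
    (hA : ∀ x y : V, ⟪A x, A y⟫ = ⟪x, y⟫)
    (hSv : ∀ x, S x = x - (2 * ⟪v, x⟫) • v)
    (hu : u ∈ LinearMap.ker (1 + A)) (hw : w ∈ LinearMap.ker (1 + A * S)) :
    ⟪v, w⟫ * ⟪v, u⟫ = 0 := by
  have hu' : u + A u = 0 := by simpa using hu
  have hw' : w + A (S w) = 0 := by simpa using hw
  have h1 := hA (S w) u
  rw [eq_neg_of_add_eq_zero_right hu', eq_neg_of_add_eq_zero_right hw', hSv, inner_neg_neg,
    inner_sub_left, real_inner_smul_left] at h1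
  linarith

lemma exists_mem_ker [FiniteDimensional ℝ V] (A S : Module.End ℝ V) (v : V) (hv : ⟪v, v⟫ = 1)
    (hA : ∀ x y : V, ⟪A x, A y⟫ = ⟪x, y⟫)
    (hSv : ∀ x, S x = x - (2 * ⟪v, x⟫) • v)
    (hK : ∀ u ∈ LinearMap.ker (1 + A), ⟪v, u⟫ = 0) :
    ∃ w ∈ LinearMap.ker (1 + A * S), ⟪v, w⟫ ≠ 0 := by
  have hmem : A v ∈ LinearMap.range (1 + A) := by
    rw [range_one_add_eq A hA, Submodule.mem_orthogonal]
    intro u hu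
    have hu' : u + A u = 0 := by simpa using hu
    have h := hA u v
    rw [eq_neg_of_add_eq_zero_right hu', inner_neg_left, real_inner_comm v u, hK u hu] at h
    linarith
  obtain ⟨w, hw⟩ := hmem
  have hw' : A w = A v - w := by
    rw [← hw]
    simp
  have h1 := hA w w
  have h2 := hA v w
  have h3 := hA v v
  rw [hw'] at h1 h2
  simp only [inner_sub_left, inner_sub_right] at h1 h2
  rw [real_inner_comm (A v) w] at h1
  have hhalf : ⟪v, w⟫ = 1 / 2 := by linarith
  refine ⟨w, ?_, by rw [hhalf]; norm_num⟩
  have hSw : S w = w - v := by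
    rw [hSv, hhalf]
    norm_num
  simp [hSw, hw']

lemma finrank_inf_ker_add_one [FiniteDimensional ℝ V] (N : Submodule ℝ V) (f : V →ₗ[ℝ] ℝ)
    (h : ∃ w ∈ N, f w ≠ 0) :
    Module.finrank ℝ (N ⊓ LinearMap.ker f : Submodule ℝ V) + 1 = Module.finrank ℝ N := by
  obtain ⟨w, hw, hfw⟩ := h
  have hne : f.domRestrict N ≠ 0 := fun h0 => hfw (by simpa using LinearMap.congr_fun h0 ⟨w, hw⟩)
  rw [← Module.Dual.finrank_ker_add_one_of_ne_zero hne, LinearMap.ker_domRestrict,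
    ← Submodule.map_comap_subtype, Submodule.finrank_map_subtype_eq]

end

/-- Lemma 4.2: let `A` and `S` be inner-product-preserving endomorphisms of a
finite-dimensional real inner product space `V` of dimension `n`, with `S` a reflection
(i.e. `dim ker(1 - S) = n - 1` and `dim ker(1 + S) = 1`). Then
`dim ker(1 + A ∘ S) = dim ker(1 + A) ± 1` and `rk(1 + A ∘ S) = rk(1 + A) ± 1`. -/
theorem stmt5 (V : Type*) [NormedAddCommGroup V] [InnerProductSpace ℝ V]
    [FiniteDimensional ℝ V] (n : ℕ) (hn : Module.finrank ℝ V = n)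
    (A S : Module.End ℝ V)
    (hA : ∀ x y : V, ⟪A x, A y⟫ = ⟪x, y⟫)
    (hS : ∀ x y : V, ⟪S x, S y⟫ = ⟪x, y⟫)
    (hS1 : Module.finrank ℝ (LinearMap.ker (1 - S)) = n - 1)
    (hS2 : Module.finrank ℝ (LinearMap.ker (1 + S)) = 1) :
    (Module.finrank ℝ (LinearMap.ker (1 + A * S))
        = Module.finrank ℝ (LinearMap.ker (1 + A)) + 1 ∨
      Module.finrank ℝ (LinearMap.ker (1 + A * S))
        = Module.finrank ℝ (LinearMap.ker (1 + A)) - 1) ∧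
    (Module.finrank ℝ (LinearMap.range (1 + A * S))
        = Module.finrank ℝ (LinearMap.range (1 + A)) + 1 ∨
      Module.finrank ℝ (LinearMap.range (1 + A * S))
        = Module.finrank ℝ (LinearMap.range (1 + A)) - 1) := by
  subst hn
  obtain ⟨v, hv, hSv⟩ := exists_unit_normal S hS hS1 hS2
  let f : V →ₗ[ℝ] ℝ := innerₗ V v
  have hf : ∀ x, f x = ⟪v, x⟫ := fun x => rfl
  have hinf : LinearMap.ker (1 + A * S) ⊓ LinearMap.ker f
      = LinearMap.ker (1 + A) ⊓ LinearMap.ker f := by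
    ext x
    simp only [Submodule.mem_inf, LinearMap.mem_ker]
    refine and_congr_left fun hx => ?_
    have hSx : S x = x := by
      rw [hSv, ← hf, hx]
      simp
    simp [hSx]
  have key : Module.finrank ℝ (LinearMap.ker (1 + A * S))
        = Module.finrank ℝ (LinearMap.ker (1 + A)) + 1 ∨
      Module.finrank ℝ (LinearMap.ker (1 + A))
        = Module.finrank ℝ (LinearMap.ker (1 + A * S)) + 1 := by
    by_cases hK : ∀ u ∈ LinearMap.ker (1 + A), ⟪v, u⟫ = 0
    · left
      have h := finrank_inf_ker_add_one _ f (exists_mem_ker A S v hv hA hSv hK)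
      have hle : LinearMap.ker (1 + A) ≤ LinearMap.ker f := hK
      rw [hinf, inf_eq_left.2 hle] at h
      exact h.symm
    · right
      push Not at hK
      obtain ⟨u, hu, hvu⟩ := hK
      have hle : LinearMap.ker (1 + A * S) ≤ LinearMap.ker f := fun w hw =>
        (mul_eq_zero.1 (inner_mul_inner_eq_zero A S v u w hA hSv hu hw)).resolve_right hvu
      have h := finrank_inf_ker_add_one _ f ⟨u, hu, hvu⟩
      rw [← hinf, inf_eq_left.2 hle] at h
      exact h.symm
  have r1 := LinearMap.finrank_range_add_finrank_ker (1 + A)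
  have r2 := LinearMap.finrank_range_add_finrank_ker (1 + A * S)
  omega
end

section
/- Let V be a finite-dimensional real inner product space and let θ be a linear endomorphism of V preserving the inner product. Then rk(1−θ²) is an even integer, where 1 denotes the identity operator on V and θ² = θ∘θ. -/
/-!
For `θ` orthogonal, `(1 - θ²) θ* = θ* - θ`, and `θ*` is invertible, so `1 - θ²` has the same range
as the skew-adjoint operator `A = θ* - θ`. A skew-adjoint operator has even rank
(`even_finrank_range_of_adjoint_eq_neg`): its range `R` is invariant and orthogonal to its kernel,
so the restriction of `A` to `R` is injective and skew-adjoint, and comparing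
`det A|R = det (A|R)* = (-1) ^ dim R * det A|R` with `det A|R ≠ 0` forces `dim R` to be even.
-/

open scoped RealInnerProductSpace

theorem even_finrank_of_injective_of_adjoint_eq_neg {W : Type*} [NormedAddCommGroup W]
    [InnerProductSpace ℝ W] [FiniteDimensional ℝ W] (S : Module.End ℝ W)
    (hS : LinearMap.adjoint S = -S) (hinj : LinearMap.ker S = ⊥) :
    Even (Module.finrank ℝ W) := by
  have hdet : LinearMap.det S ≠ 0 := fun h =>
    (LinearMap.bot_lt_ker_of_det_eq_zero h).ne' hinj
  have hadj : LinearMap.det (LinearMap.adjoint S) = LinearMap.det S := by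
    let b := stdOrthonormalBasis ℝ W
    rw [← LinearMap.det_toMatrix b.toBasis, ← LinearMap.det_toMatrix b.toBasis,
      LinearMap.toMatrix_adjoint, Matrix.det_conjTranspose, star_trivial]
  have hneg : -S = (-1 : ℝ) • S := by simp
  rw [hS, hneg, LinearMap.det_smul] at hadj
  by_contra hodd
  rw [(Nat.not_even_iff_odd.mp hodd).neg_one_pow] at hadj
  exact hdet (by linarith)

theorem even_finrank_range_of_adjoint_eq_neg {V : Type*} [NormedAddCommGroup V]
    [InnerProductSpace ℝ V] [FiniteDimensional ℝ V] (A : Module.End ℝ V)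
    (hA : LinearMap.adjoint A = -A) : Even (Module.finrank ℝ (LinearMap.range A)) := by
  have hskew : ∀ x y : V, ⟪A x, y⟫ = -⟪x, A y⟫ := fun x y => by
    rw [← LinearMap.adjoint_inner_right, hA, LinearMap.neg_apply, inner_neg_right]
  have hmaps : ∀ x ∈ LinearMap.range A, A x ∈ LinearMap.range A := fun x _ => ⟨x, rfl⟩
  refine even_finrank_of_injective_of_adjoint_eq_neg (A.restrict hmaps) ?_ ?_
  · symm
    rw [LinearMap.eq_adjoint_iff]
    intro x y
    have := hskew x y
    simp only [LinearMap.neg_apply, inner_neg_left, Submodule.coe_inner,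
      LinearMap.coe_restrict_apply]
    linarith
  · rw [LinearMap.ker_eq_bot']
    rintro ⟨_, y, rfl⟩ h
    have h0 : A (A y) = 0 := congrArg Subtype.val h
    have : ⟪A y, A y⟫ = 0 := by rw [hskew, h0, inner_zero_right, neg_zero]
    exact Subtype.ext (inner_self_eq_zero.mp this)

/-- Remark 5.4: if `θ` is an inner-product-preserving endomorphism of a
finite-dimensional real inner product space `V`, then `rk(1 - θ²)` is even. -/
theorem stmt7 (V : Type*) [NormedAddCommGroup V] [InnerProductSpace ℝ V]
    [FiniteDimensional ℝ V]
    (θ : Module.End ℝ V) (hθ : ∀ x y : V, ⟪θ x, θ y⟫ = ⟪x, y⟫) :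
    Even (Module.finrank ℝ (LinearMap.range (1 - θ * θ))) := by
  have h1 : LinearMap.adjoint θ * θ = 1 := by
    ext x
    refine ext_inner_right ℝ fun y => ?_
    rw [Module.End.mul_apply, LinearMap.adjoint_inner_left, hθ, Module.End.one_apply]
  have h2 : θ * LinearMap.adjoint θ = 1 := mul_eq_one_comm.mp h1
  have hsurj : LinearMap.range (LinearMap.adjoint θ) = ⊤ :=
    LinearMap.range_eq_top.mpr fun x => ⟨θ x, LinearMap.congr_fun h1 x⟩
  have hprod : (1 - θ * θ) * LinearMap.adjoint θ = LinearMap.adjoint θ - θ := by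
    rw [sub_mul, one_mul, mul_assoc, h2, mul_one]
  rw [← LinearMap.range_comp_of_range_eq_top (1 - θ * θ) hsurj, ← Module.End.mul_eq_comp, hprod]
  apply even_finrank_range_of_adjoint_eq_neg
  rw [map_sub, LinearMap.adjoint_adjoint, neg_sub]
end

section
/- Let G be a group, let n ≥ 2 be an integer, and consider the twisted conjugation action of Gⁿ on itself given by (g₁, …, gₙ)·(k₁, …, kₙ) = (g₁k₁g₂⁻¹, g₂k₂g₃⁻¹, …, g_{n−1}k_{n−1}gₙ⁻¹, gₙkₙg₁⁻¹). Then for any (k₁, …, kₙ) ∈ Gⁿ, the orbit of (k₁, …, kₙ) under this action equals the set of all (h₁, …, hₙ) ∈ Gⁿ such that h₁h₂⋯hₙ is conjugate in G to k₁k₂⋯kₙ. Equivalently, the orbits of this action are precisely the preimages μₙ⁻¹(C) of conjugacy classes C of G under the multiplication map μₙ: Gⁿ → G, μₙ(g₁, …, gₙ) = g₁g₂⋯gₙ. -/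
/-!
Cut the cycle open: a tuple `g` indexed cyclically is the same as a sequence `a` on `Fin (n + 1)`
whose last entry equals its first, and then `g (i + 1)` is `a i.succ`. The relation
`h i = a i.castSucc * k i * (a i.succ)⁻¹` telescopes to
`partialProd h j = a 0 * partialProd k j * (a j)⁻¹`; taking `j` last shows that `a 0` conjugates
the product of `k` to that of `h`. Conversely, if `c` conjugates the product of `k` to that of `h`,
then `a j = (partialProd h j)⁻¹ * c * partialProd k j` solves the relation, and `a` starts and ends
at `c`, so it closes up to a cyclic tuple.
-/

/-- The full product, as the last partial product. -/
lemma partialProd_last_eq {G : Type*} [Group G] {n : ℕ} (f : Fin n → G) :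
    Fin.partialProd f (Fin.last n) = (List.ofFn f).prod := by
  simp [Fin.partialProd, List.take_of_length_le]

lemma partialProd_telescope {G : Type*} [Group G] {n : ℕ} {k h : Fin n → G}
    {a : Fin (n + 1) → G} (ha : ∀ i, h i = a i.castSucc * k i * (a i.succ)⁻¹)
    (j : Fin (n + 1)) :
    Fin.partialProd h j = a 0 * Fin.partialProd k j * (a j)⁻¹ := by
  induction j using Fin.induction with
  | zero => simp
  | succ i ih =>
    rw [Fin.partialProd_succ, Fin.partialProd_succ, ih, ha i]
    group

/-- A sequence whose last entry equals its first is determined cyclically by its other entries. -/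
lemma cyclic_succ {G : Type*} {m : ℕ} (a : Fin (m + 2) → G)
    (ha : a (Fin.last (m + 1)) = a 0) (i : Fin (m + 1)) :
    a (i + 1).castSucc = a i.succ := by
  induction i using Fin.lastCases with
  | last => rw [Fin.last_add_one, Fin.succ_last, ha, Fin.castSucc_zero]
  | cast i => rw [Fin.coeSucc_eq_succ, Fin.succ_castSucc]

/-- Lemma 7.1: for the twisted conjugation action of `Gⁿ` on itself given by
`(g₁, …, gₙ)·(k₁, …, kₙ) = (g₁k₁g₂⁻¹, …, gₙkₙg₁⁻¹)` (indices cyclic), the orbit of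
`(k₁, …, kₙ)` is exactly the set of `(h₁, …, hₙ)` with `h₁⋯hₙ` conjugate to `k₁⋯kₙ`. -/
theorem stmt9 (G : Type*) [Group G] (n : ℕ) [NeZero n] (hn : 2 ≤ n)
    (k h : Fin n → G) :
    (∃ g : Fin n → G, ∀ i : Fin n, h i = g i * k i * (g (i + 1))⁻¹) ↔
      IsConj ((List.ofFn k).prod) ((List.ofFn h).prod) := by
  obtain ⟨m, rfl⟩ : ∃ m, n = m + 1 := ⟨n - 1, by omega⟩
  rw [isConj_iff, ← partialProd_last_eq, ← partialProd_last_eq]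
  constructor
  · rintro ⟨g, hg⟩
    let a : Fin (m + 2) → G := Fin.snoc (α := fun _ => G) g (g 0)
    have hcast : ∀ i : Fin (m + 1), a i.castSucc = g i := fun i => by simp [a]
    have hzero : a 0 = g 0 := hcast 0
    have hlast : a (Fin.last (m + 1)) = a 0 := by rw [hzero]; simp [a]
    have ha : ∀ i, h i = a i.castSucc * k i * (a i.succ)⁻¹ := fun i => by
      rw [← cyclic_succ a hlast, hcast, hcast]
      exact hg i
    refine ⟨a 0, ?_⟩
    rw [partialProd_telescope ha, hlast]
  · rintro ⟨c, hc⟩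
    let a : Fin (m + 2) → G := fun j => (Fin.partialProd h j)⁻¹ * c * Fin.partialProd k j
    have hlast : a (Fin.last (m + 1)) = a 0 := by
      simp only [a, ← hc, Fin.partialProd_zero]
      group
    refine ⟨fun i => a i.castSucc, fun i => ?_⟩
    have hs : a (i + 1).castSucc = a i.succ := cyclic_succ a hlast i
    change h i = a i.castSucc * k i * (a (i + 1).castSucc)⁻¹
    rw [hs]
    simp only [a, Fin.partialProd_succ]
    group
end

section
/- Let V be a finite-dimensional vector space over a field, let n ≥ 1 be an integer, and let w₁, …, wₙ be invertible linear endomorphisms of V. Consider the linear endomorphism Φ of Vⁿ given by Φ(x₁, …, xₙ) = (x₁ + w₁(x₂), x₂ + w₂(x₃), …, x_{n−1} + w_{n−1}(xₙ), xₙ + wₙ(x₁)). Then dim ker(Φ) = dim ker(1 − (−1)ⁿ w₁∘w₂∘⋯∘wₙ), where 1 denotes the identity operator on V. -/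
/-!
The equation `Φ x = 0` says `xᵢ = -wᵢ x_{i+1}` for all `i`, with indices read cyclically. Unrolling
these equations up to the end of the cycle expresses every coordinate through `x₀`: it is
`xₖ = (-wₖ) ∘ ⋯ ∘ (-w_{n-1}) x₀` (indices starting at `0`), the operator being `tailProd w k`. For
`k = 0` this is the condition `x₀ = (-1)ⁿ w₀ ⋯ w_{n-1} x₀`, and conversely each `v` satisfying this
condition gives the solution `xₖ = tailProd w k v`. Hence `x ↦ x₀` is a linear isomorphism between
the two kernels.
-/

/-- The composite `(-wₖ) ∘ (-w_{k+1}) ∘ ⋯ ∘ (-w_{n-1})`, with indices starting at `0`; it is the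
identity for `k ≥ n`. -/
def tailProd {K V : Type*} [Ring K] [AddCommGroup V] [Module K V] {n : ℕ}
    (w : Fin n → Module.End K V) (k : ℕ) : Module.End K V :=
  ((List.ofFn fun i => -w i).drop k).prod

section

variable {K V : Type*} [Ring K] [AddCommGroup V] [Module K V] {n : ℕ}
  (w : Fin n → Module.End K V)

lemma tailProd_self : tailProd w n = 1 := by
  rw [tailProd, List.drop_of_length_le (by simp), List.prod_nil]

lemma tailProd_of_lt {k : ℕ} (hk : k < n) :
    tailProd w k = -w ⟨k, hk⟩ * tailProd w (k + 1) := by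
  unfold tailProd
  rw [List.drop_eq_getElem_cons (by simpa using hk), List.prod_cons, List.getElem_ofFn]

lemma tailProd_zero : tailProd w 0 = (-1) ^ n * (List.ofFn w).prod := by
  have h : (List.ofFn fun i => -w i) = (List.ofFn w).map Neg.neg := by
    rw [List.map_ofFn]; rfl
  rw [tailProd, List.drop_zero, h, List.prod_map_neg, List.length_ofFn]

lemma ofNat_succ_eq_add_one [NeZero n] (i : Fin n) : Fin.ofNat n (i + 1) = i + 1 := by
  ext
  simp [Fin.val_add]

/-- Downward induction from `k = n`, where the index wraps around to `0`. -/
lemma apply_ofNat_eq_tailProd [NeZero n] {x : Fin n → V}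
    (hx : ∀ i, x i = -w i (x (i + 1))) {k : ℕ} (hk : k ≤ n) :
    x (Fin.ofNat n k) = tailProd w k (x 0) := by
  induction hk using Nat.decreasingInduction with
  | self =>
    have h : Fin.ofNat n n = 0 := by ext; simp
    rw [h, tailProd_self, Module.End.one_apply]
  | of_succ k hk ih =>
    have h : Fin.ofNat n k = ⟨k, hk⟩ := by ext; simp [Nat.mod_eq_of_lt hk]
    rw [h, hx, ← ofNat_succ_eq_add_one, ih, tailProd_of_lt w hk]
    simp

lemma tailProd_apply_eq [NeZero n] {v : V} (hv : tailProd w 0 v = v) (i : Fin n) :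
    tailProd w i v = -w i (tailProd w (i + 1 : Fin n) v) := by
  -- At the last index `i + 1` wraps around to `0`, and `hv` closes the cycle.
  have h : tailProd w (i + 1 : Fin n) v = tailProd w (i + 1 : ℕ) v := by
    rw [← ofNat_succ_eq_add_one, Fin.val_ofNat]
    rcases (Nat.succ_le_of_lt i.isLt).lt_or_eq with hi | hi
    · rw [Nat.mod_eq_of_lt hi]
    · have hi' : (i : ℕ) + 1 = n := hi
      rw [hi', Nat.mod_self, hv, tailProd_self, Module.End.one_apply]
  rw [h, tailProd_of_lt w i.isLt]
  simp

end


/-- Used in the proof of Proposition 7.3: for invertible endomorphisms `w₁, …, wₙ` of a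
finite-dimensional vector space `V`, the endomorphism `Φ` of `Vⁿ` given by
`Φ(x₁, …, xₙ) = (x₁ + w₁ x₂, …, x_{n-1} + w_{n-1} xₙ, xₙ + wₙ x₁)` satisfies
`dim ker Φ = dim ker (1 - (-1)ⁿ w₁∘w₂∘⋯∘wₙ)`. -/
theorem stmt12 (K : Type*) [Field K] (V : Type*) [AddCommGroup V] [Module K V]
    [FiniteDimensional K V] (n : ℕ) [NeZero n] (hn : 1 ≤ n)
    (w : Fin n → Module.End K V) (hw : ∀ i, Function.Bijective (w i)) :
    Module.finrank K
        (LinearMap.ker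
          (LinearMap.pi fun i : Fin n =>
            (LinearMap.proj i : (Fin n → V) →ₗ[K] V)
              + (w i) ∘ₗ (LinearMap.proj (i + 1) : (Fin n → V) →ₗ[K] V)))
      = Module.finrank K (LinearMap.ker (1 - (-1) ^ n * (List.ofFn w).prod)) := by
  have hmem : ∀ x : Fin n → V, x ∈ LinearMap.ker
      (LinearMap.pi fun i : Fin n =>
        (LinearMap.proj i : (Fin n → V) →ₗ[K] V)
          + (w i) ∘ₗ (LinearMap.proj (i + 1) : (Fin n → V) →ₗ[K] V)) ↔
      ∀ i, x i = -w i (x (i + 1)) := fun x => by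
    simp [LinearMap.mem_ker, funext_iff, eq_neg_iff_add_eq_zero]
  have hmem' : ∀ v : V, v ∈ LinearMap.ker (1 - (-1) ^ n * (List.ofFn w).prod) ↔
      tailProd w 0 v = v := fun v => by
    rw [← tailProd_zero, LinearMap.mem_ker, LinearMap.sub_apply, Module.End.one_apply,
      sub_eq_zero, eq_comm]
  have hcoord : ∀ x : Fin n → V, (∀ i, x i = -w i (x (i + 1))) →
      ∀ i : Fin n, tailProd w i (x 0) = x i := fun x hx i => by
    rw [← apply_ofNat_eq_tailProd w hx i.isLt.le, Fin.ofNat_val_eq_self]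
  refine LinearEquiv.finrank_eq (LinearEquiv.ofLinearMap
    (LinearMap.restrict (LinearMap.proj 0) fun x hx => ?_)
    (LinearMap.restrict (LinearMap.pi fun i : Fin n => tailProd w i) fun v hv => ?_) ?_ ?_)
  · exact (hmem' _).2 (by simpa using hcoord x ((hmem x).1 hx) 0)
  · exact (hmem _).2 fun i => tailProd_apply_eq w ((hmem' v).1 hv) i
  · ext ⟨v, hv⟩
    simpa using (hmem' v).1 hv
  · ext ⟨x, hx⟩ i
    simpa using hcoord x ((hmem x).1 hx) i
end
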